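/- Let f : (ℝ^n, 0) → (ℝ, 0) be a real analytic function germ such that 0 is a singular point of f (i.e. the gradient of f vanishes at 0). Then the set of singular points of f is contained in f⁻¹(0) as germs at 0; that is, there is a neighbourhood U of 0 such that every point x ∈ U with ∇f(x) = 0 satisfies f(x) = 0. -/

import Mathlib

/-!
Let `g` be the germ of `f - f 0`, and let `J` be the ideal generated by the directional derivatives
of `f`. It suffices that `g` lies in the radical of `J`, that is, in every prime ideal `P ⊇ J`.
Let `K` be the field of fractions of the quotient by `P`. The directional derivatives at this
`K`-valued point of the algebra of germs all kill `f`. By Weierstrass division one can pass to a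
linear quotient of the space on which no nonzero germ vanishes at the point, and `K` is then
algebraic over the fraction field of the germs there. An element killed by all extensions of the
directional derivatives is a constant up to an algebraic extension, because its minimal relation
has, up to a common factor, coefficients with vanishing derivatives. So the class of `f` in `K` is
algebraic over the base field; its minimal polynomial, evaluated at `f`, is a germ in `P`, hence
not a unit, so `f 0` is a root, and the class of `f` is the constant `f 0`.

Weierstrass division is proved by operators: multiplication by `f (t, x)` in the variable `t`
becomes a power series in the right shift, which depends analytically on `x`, and division with
remainder by `t ^ m` amounts to applying the `m`-th power of the left shift.
-/

open Filter Topology Polynomial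
open scoped BoundedContinuousFunction

section Derivation

variable {k R K : Type*} [CommRing k] [CommRing R] [Algebra k R]

section CommRing

variable [CommRing K] [Algebra k K] [Algebra R K]

lemma exists_coeff_eq_derivation_coeff (d : Derivation k R R) {D : Derivation k K K}
    (hD : ∀ r, D (algebraMap R K r) = algebraMap R K (d r)) {u : K} (hDu : D u = 0) (p : R[X]) :
    ∃ q : R[X], (∀ i, q.coeff i = d (p.coeff i)) ∧ aeval u q = D (aeval u p) := by
  refine ⟨∑ i ∈ p.support, monomial i (d (p.coeff i)), fun i => ?_, ?_⟩
  · simp +contextual [coeff_monomial]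
  · rw [aeval_def u p, eval₂_eq_sum, sum_def, map_sum, map_sum]
    simp [Derivation.leibniz_pow, hD, hDu, aeval_monomial, mul_comm]

-- A relation of minimal degree is determined up to a factor by its leading coefficient.
lemma exists_aeval_eq_zero_mul_derivation_coeff {ι : Type*} (d : ι → Derivation k R R)
    {D : ι → Derivation k K K} (hD : ∀ j r, D j (algebraMap R K r) = algebraMap R K (d j r))
    {u : K} (hu : IsAlgebraic R u) (hDu : ∀ j, D j u = 0) :
    ∃ p : R[X], p ≠ 0 ∧ aeval u p = 0 ∧
      ∀ j i, p.leadingCoeff * d j (p.coeff i) = p.coeff i * d j p.leadingCoeff := by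
  obtain ⟨p, ⟨hp, hpu⟩, hmin⟩ :=
    degree_lt_wf.has_min {p : R[X] | p ≠ 0 ∧ aeval u p = 0} hu
  refine ⟨p, hp, hpu, fun j => ?_⟩
  obtain ⟨q, hq, hqu⟩ := exists_coeff_eq_derivation_coeff (d j) (hD j) (hDu j) p
  let w := C p.leadingCoeff * q - C (d j p.leadingCoeff) * p
  have hw (i : ℕ) : w.coeff i = p.leadingCoeff * d j (p.coeff i) - d j p.leadingCoeff * p.coeff i :=
    by simp [w, hq]
  have hwdeg : w.degree < p.degree := by
    rw [degree_eq_natDegree hp, degree_lt_iff_coeff_zero]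
    intro i hi
    rcases hi.eq_or_lt with rfl | hi
    · rw [hw, coeff_natDegree, mul_comm, sub_self]
    · rw [hw, coeff_eq_zero_of_natDegree_lt hi, map_zero, mul_zero, mul_zero, sub_zero]
  have hw0 : w = 0 := by
    by_contra hne
    exact hmin w ⟨hne, by simp [w, hqu, hpu]⟩ hwdeg
  intro i
  rw [mul_comm (p.coeff i), ← sub_eq_zero, ← hw, hw0, coeff_zero]

end CommRing

section Field

variable [Field K] [Algebra k K] [Algebra R K]

lemma formallySmooth_of_charZero (R K : Type*) [CommRing R] [Field K] [CharZero K] [Algebra R K]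
    [FaithfulSMul R K] : Algebra.FormallySmooth R K := by
  have : IsDomain R := (FaithfulSMul.algebraMap_injective R K).isDomain _
  let L := FractionRing R
  let _ : Algebra L K := FractionRing.liftAlgebra R K
  have : IsScalarTower R L K := FractionRing.isScalarTower_liftAlgebra R K
  have : CharZero L := (algebraMap L K).charZero
  obtain ⟨s, hs⟩ := exists_isTranscendenceBasis L K
  have := hs.isAlgebraic_field
  have : Algebra.FormallySmooth L K :=
    Algebra.FormallySmooth.of_algebraicIndependent_of_isSeparable hs.1
  have : Algebra.FormallySmooth R L :=
    Algebra.FormallySmooth.of_isLocalization (nonZeroDivisors R)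
  exact Algebra.FormallySmooth.comp R L K

open TensorProduct in
lemma exists_derivation_extension [IsScalarTower k R K] [Algebra.FormallySmooth R K]
    (d : Derivation k R K) : ∃ D : Derivation k K K, ∀ r, D (algebraMap R K r) = d r := by
  have hker : LinearMap.ker (KaehlerDifferential.mapBaseChange k R K) = ⊥ := by
    refine LinearMap.ker_eq_bot'.2 fun x hx => ?_
    obtain ⟨x, rfl⟩ := (Algebra.H1Cotangent.exact_δ_mapBaseChange k R K x).mp hx
    rw [Subsingleton.elim x 0, map_zero]
  obtain ⟨φ, hφ⟩ := LinearMap.exists_leftInverse_of_injective _ hker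
  let ψ : K ⊗[R] Ω[R⁄k] →ₗ[K] K := d.liftKaehlerDifferential.liftBaseChange K
  refine ⟨(ψ ∘ₗ φ).compDer (KaehlerDifferential.D k K), fun r => ?_⟩
  have hφr : φ (KaehlerDifferential.D k K (algebraMap R K r)) =
      1 ⊗ₜ KaehlerDifferential.D k R r := by
    simpa using LinearMap.congr_fun hφ (1 ⊗ₜ KaehlerDifferential.D k R r)
  simp [hφr, ψ]

lemma isAlgebraic_of_forall_derivation_eq_zero [IsScalarTower k R K] [CharZero K]
    [FaithfulSMul R K] {ι : Type*} {d : ι → Derivation k R R}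
    (hconst : ∀ a b, a ≠ 0 → (∀ j, a * d j b = b * d j a) → ∃ c : k, b = c • a)
    {u : K} (hu : IsAlgebraic R u)
    (hDu : ∀ j (D : Derivation k K K),
      (∀ r, D (algebraMap R K r) = algebraMap R K (d j r)) → D u = 0) :
    IsAlgebraic k u := by
  have := formallySmooth_of_charZero R K
  choose D hD using fun j => exists_derivation_extension ((Algebra.linearMap R K).compDer (d j))
  obtain ⟨p, hp, hpu, hpd⟩ :=
    exists_aeval_eq_zero_mul_derivation_coeff d hD hu fun j => hDu j (D j) (hD j)
  have hp0 : p.leadingCoeff ≠ 0 := leadingCoeff_ne_zero.2 hp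
  choose c hc using fun i => hconst p.leadingCoeff (p.coeff i) hp0 fun j => hpd j i
  let P : k[X] := ∑ i ∈ p.support, monomial i (c i)
  refine ⟨P, fun hP => hp0 ?_, ?_⟩
  · have hcoeff : P.coeff p.natDegree = c p.natDegree := by
      simp +contextual [P, coeff_monomial, hp]
    rw [← coeff_natDegree, hc, ← hcoeff, hP, coeff_zero, zero_smul]
  · have hpP : aeval u p = algebraMap R K p.leadingCoeff * aeval u P := by
      rw [aeval_def u p, eval₂_eq_sum, sum_def, map_sum, Finset.mul_sum]
      refine Finset.sum_congr rfl fun i _ => ?_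
      rw [hc, aeval_monomial, Algebra.smul_def, map_mul, ← IsScalarTower.algebraMap_apply]
      ring
    have ha : algebraMap R K p.leadingCoeff ≠ 0 := by simpa using hp0
    exact (mul_eq_zero.1 (hpP.symm.trans hpu)).resolve_left ha

end Field

end Derivation

lemma isIntegralElem_trans {R A K : Type*} [CommRing R] [CommRing A] [CommRing K]
    {f : R →+* K} {g : A →+* K} (hfg : ∀ a, f.IsIntegralElem (g a)) {u : K}
    (hu : g.IsIntegralElem u) : f.IsIntegralElem u := by
  let _ := f.toAlgebra
  obtain ⟨p, hp, hpu⟩ := hu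
  have hu : IsIntegral (integralClosure R K) u :=
    ⟨p.map (g.codRestrict (integralClosure R K) hfg), hp.map _, by rwa [eval₂_map]⟩
  exact isIntegral_trans (R := R) u hu

lemma exists_algHom_field_eq_zero_iff_mem.{u} {k : Type*} {A : Type u} [CommRing k] [CommRing A]
    [Algebra k A] (P : Ideal A) [P.IsPrime] :
    ∃ (K : Type u) (_ : Field K) (_ : Algebra k K) (ev : A →ₐ[k] K), ∀ a, ev a = 0 ↔ a ∈ P :=
  ⟨FractionRing (A ⧸ P), inferInstance, inferInstance,
    (IsScalarTower.toAlgHom k (A ⧸ P) _).comp (Ideal.Quotient.mkₐ k P), fun a => by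
      simp [Ideal.Quotient.eq_zero_iff_mem]⟩

section DerivationsAlong

variable {k A K : Type*} [CommRing k] [CommRing A] [Algebra k A] [CommRing K] [Algebra k K]

/-- The derivations of `A` with values in `K`, where `K` is an `A`-module through `ev`. They are
encoded as linear maps because `ev` is not an instance. -/
def derivationsAlong (ev : A →ₐ[k] K) : Submodule K (A →ₗ[k] K) where
  carrier := {δ | ∀ a b, δ (a * b) = ev a * δ b + ev b * δ a}
  zero_mem' := by simp
  add_mem' {δ ε} hδ hε a b := by
    simp only [LinearMap.add_apply, hδ a b, hε a b]
    ring
  smul_mem' c δ hδ a b := by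
    simp only [LinearMap.smul_apply, hδ a b, smul_eq_mul]
    ring

lemma map_pow_eq_zero_of_mem_derivationsAlong {ev : A →ₐ[k] K} {δ : A →ₗ[k] K}
    (hδ : δ ∈ derivationsAlong ev) {a : A} (ha : δ a = 0) (n : ℕ) : δ (a ^ n) = 0 := by
  induction n with
  | zero => simpa using hδ 1 1
  | succ n ih => rw [pow_succ, hδ, ih, ha, mul_zero, mul_zero, add_zero]

lemma derivation_comp_mem_derivationsAlong (ev : A →ₐ[k] K) (D : Derivation k K K) :
    D.toLinearMap ∘ₗ ev.toLinearMap ∈ derivationsAlong ev := fun a b => by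
  simp

lemma comp_derivation_mem_derivationsAlong (ev : A →ₐ[k] K) (d : Derivation k A A) :
    ev.toLinearMap ∘ₗ d.toLinearMap ∈ derivationsAlong ev := fun a b => by
  simp

end DerivationsAlong

section FunctionalCalculus

variable {𝕜 E B : Type*} [NontriviallyNormedField 𝕜] [NormedAddCommGroup E] [NormedSpace 𝕜 E]
  [NormedRing B] [NormedAlgebra 𝕜 B]

/-- The power series of `(t, x) ↦ f (t b, x)`, where `p` is the power series of a scalar function
`f` and its first variable is replaced by the multiple `t b` of an element of an algebra. A
monomial of `p` is split into its parts of degree `#S` in the first variable. -/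
noncomputable def substSeries (p : FormalMultilinearSeries 𝕜 (𝕜 × E) 𝕜) (b : B) :
    FormalMultilinearSeries 𝕜 (𝕜 × E) B := fun k =>
  ∑ S : Finset (Fin k),
    (ContinuousLinearMap.toSpanSingleton 𝕜 (b ^ S.card)).compContinuousMultilinearMap
      ((p k).compContinuousLinearMap fun i => if i ∈ S
        then ContinuousLinearMap.inl 𝕜 𝕜 E ∘L ContinuousLinearMap.fst 𝕜 𝕜 E
        else ContinuousLinearMap.inr 𝕜 𝕜 E ∘L ContinuousLinearMap.snd 𝕜 𝕜 E)

lemma substSeries_apply (p : FormalMultilinearSeries 𝕜 (𝕜 × E) 𝕜) (b : B) (k : ℕ)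
    (z : Fin k → 𝕜 × E) : substSeries p b k z =
      ∑ S : Finset (Fin k), p k (S.piecewise (fun i => ((z i).1, 0)) fun i => (0, (z i).2)) •
        b ^ S.card := by
  simp only [substSeries, sum_apply]
  refine Finset.sum_congr rfl fun S _ => congrArg (· • b ^ S.card) (congrArg (p k) ?_)
  funext i
  by_cases hi : i ∈ S <;> simp [hi]

lemma norm_substSeries_le [NormOneClass B] (p : FormalMultilinearSeries 𝕜 (𝕜 × E) 𝕜) (b : B)
    (k : ℕ) : ‖substSeries p b k‖ ≤ ‖p k‖ * (2 * (1 + ‖b‖)) ^ k := by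
  refine ContinuousMultilinearMap.opNorm_le_bound (by positivity) fun z => ?_
  have hterm (S : Finset (Fin k)) :
      ‖p k (S.piecewise (fun i => ((z i).1, 0)) fun i => (0, (z i).2)) • b ^ S.card‖ ≤
        ‖p k‖ * (∏ i, ‖z i‖) * (1 + ‖b‖) ^ k := by
    have hp : ‖p k (S.piecewise (fun i => ((z i).1, 0)) fun i => (0, (z i).2))‖ ≤
        ‖p k‖ * ∏ i, ‖z i‖ := by
      refine (p k).le_opNorm_mul_prod_of_le fun i => ?_
      by_cases hi : i ∈ S <;> simp [hi, Prod.norm_def]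
    have hb : ‖b ^ S.card‖ ≤ (1 + ‖b‖) ^ k :=
      calc ‖b ^ S.card‖ ≤ (1 + ‖b‖) ^ S.card := (norm_pow_le b _).trans (by gcongr; simp)
        _ ≤ (1 + ‖b‖) ^ k := pow_le_pow_right₀ (by simp) (card_finset_fin_le S)
    rw [norm_smul]
    gcongr
  calc ‖substSeries p b k z‖
      ≤ ∑ _S : Finset (Fin k), ‖p k‖ * (∏ i, ‖z i‖) * (1 + ‖b‖) ^ k := by
        rw [substSeries_apply]
        exact norm_sum_le_of_le _ fun S _ => hterm S
    _ = ‖p k‖ * (2 * (1 + ‖b‖)) ^ k * ∏ i, ‖z i‖ := by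
        simp [mul_pow]
        ring

lemma radius_substSeries_pos [NormOneClass B] {p : FormalMultilinearSeries 𝕜 (𝕜 × E) 𝕜}
    (hp : 0 < p.radius) (b : B) : 0 < (substSeries p b).radius := by
  obtain ⟨r, hr0, hr⟩ := ENNReal.lt_iff_exists_nnreal_btwn.1 hp
  obtain ⟨C, -, hpC⟩ := p.norm_mul_pow_le_of_lt_radius hr
  have hr0 : 0 < r := by simpa using hr0
  have hb : 0 < 2 * (1 + ‖b‖₊) := by positivity
  refine lt_of_lt_of_le (ENNReal.coe_pos.2 (div_pos hr0 hb))
    ((substSeries p b).le_radius_of_bound C fun k => ?_)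
  calc ‖substSeries p b k‖ * ((r / (2 * (1 + ‖b‖₊)) : NNReal) : ℝ) ^ k
      ≤ ‖p k‖ * (2 * (1 + ‖b‖)) ^ k * (r / (2 * (1 + ‖b‖))) ^ k := by
        push_cast
        gcongr
        exact norm_substSeries_le p b k
    _ = ‖p k‖ * r ^ k := by
        rw [mul_assoc, ← mul_pow, mul_div_cancel₀]
        positivity
    _ ≤ C := hpC k

lemma apply_substSeries_of_apply_mul (p : FormalMultilinearSeries 𝕜 (𝕜 × E) 𝕜) {b : B} {s : 𝕜}
    {ψ : B →L[𝕜] 𝕜} (hψ : ∀ a, ψ (b * a) = s * ψ a) (k : ℕ) (z : 𝕜 × E) :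
    ψ (substSeries p b k fun _ => z) = p k (fun _ => (z.1 * s, z.2)) * ψ 1 := by
  have hpow (j : ℕ) : ψ (b ^ j) = s ^ j * ψ 1 := by
    induction j with
    | zero => simp
    | succ j ih => rw [pow_succ', hψ, ih, pow_succ', mul_assoc]
  have hsplit : (fun _ : Fin k => (z.1 * s, z.2)) =
      (fun _ => s • ((z.1, 0) : 𝕜 × E)) + fun _ => (0, z.2) := by
    ext <;> simp [mul_comm]
  rw [hsplit, ContinuousMultilinearMap.map_add_univ, substSeries_apply, map_sum, Finset.sum_mul]
  refine Finset.sum_congr rfl fun S _ => ?_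
  have hsmul : p k (S.piecewise (fun _ => s • ((z.1, 0) : 𝕜 × E)) fun _ => (0, z.2)) =
      s ^ S.card • p k (S.piecewise (fun _ => ((z.1, 0) : 𝕜 × E)) fun _ => (0, z.2)) := by
    have hpiece : (S.piecewise (fun _ => s • ((z.1, 0) : 𝕜 × E)) fun _ => (0, z.2)) =
        S.piecewise (fun i => s • S.piecewise (fun _ => (z.1, 0)) (fun _ => (0, z.2)) i)
          (S.piecewise (fun _ => (z.1, 0)) fun _ => (0, z.2)) := by
      funext i
      by_cases hi : i ∈ S <;> simp [hi]
    rw [hpiece]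
    simpa using (p k).toMultilinearMap.map_piecewise_smul (fun _ => s)
      (S.piecewise (fun _ => ((z.1, 0) : 𝕜 × E)) fun _ => (0, z.2)) S
  rw [map_smul, hpow, hsmul, smul_eq_mul, smul_eq_mul]
  ring

lemma exists_analyticAt_subst [NormOneClass B] [CompleteSpace B] {f : 𝕜 × E → 𝕜}
    (hf : AnalyticAt 𝕜 f 0) (b : B) :
    ∃ F : 𝕜 × E → B, AnalyticAt 𝕜 F 0 ∧ F 0 = algebraMap 𝕜 B (f 0) ∧
      ∀ᶠ z in 𝓝 0, ∀ s : 𝕜, ‖s‖ ≤ 1 → ∀ ψ : B →L[𝕜] 𝕜, (∀ a, ψ (b * a) = s * ψ a) →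
        ψ (F z) = f (z.1 * s, z.2) * ψ 1 := by
  obtain ⟨p, R, hR⟩ := hf
  have hP : HasFPowerSeriesOnBall (substSeries p b).sum (substSeries p b) 0 _ :=
    (substSeries p b).hasFPowerSeriesOnBall
      (radius_substSeries_pos (hR.r_pos.trans_le hR.r_le) b)
  refine ⟨_, hP.analyticAt, ?_, ?_⟩
  · rw [← hP.coeff_zero 0, ← hR.coeff_zero 0, substSeries_apply]
    rw [Fintype.sum_unique, Algebra.algebraMap_eq_smul_one]
    congr! 2
    simp [Finset.eq_empty_of_isEmpty]
  · filter_upwards [Metric.eball_mem_nhds 0 hR.r_pos, Metric.eball_mem_nhds 0 hP.r_pos]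
      with z hzR hzP s hs ψ hψ
    have hzs : (z.1 * s, z.2) ∈ Metric.eball (0 : 𝕜 × E) R := by
      refine Metric.mem_eball.2 (lt_of_le_of_lt ?_ (Metric.mem_eball.1 hzR))
      rw [edist_zero_right, edist_zero_right, enorm_le_iff_norm_le, Prod.norm_mk, Prod.norm_def,
        norm_mul]
      gcongr
      exact mul_le_of_le_one_right (norm_nonneg _) hs
    have hsumF := (hP.hasSum hzP).mapL ψ
    have hsumf := (hR.hasSum hzs).mul_right (ψ 1)
    simp only [zero_add] at hsumF hsumf
    exact hsumF.unique (hsumf.congr_fun fun k => apply_substSeries_of_apply_mul p hψ k z)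

end FunctionalCalculus

section Shift

variable {𝕜 : Type*} [NontriviallyNormedField 𝕜]

lemma analyticAt_ringInverse {E B : Type*} [NormedAddCommGroup E] [NormedSpace 𝕜 E]
    [NormedRing B] [NormedAlgebra 𝕜 B] [CompleteSpace B] {A : E → B} {a : E}
    (hA : AnalyticAt 𝕜 A a) (hu : IsUnit (A a)) : AnalyticAt 𝕜 (fun x => Ring.inverse (A x)) a := by
  obtain ⟨z, hz⟩ := hu
  exact AnalyticAt.fun_comp (hz ▸ analyticAt_inverse z) hA

variable (𝕜) in
/-- The shift operators of a space `X` of sequences, thought of as power series `v₀ + v₁ t + ⋯`.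
Here `left` is `(v₀, v₁, …) ↦ (v₁, v₂, …)`, `right` is `(v₀, v₁, …) ↦ (0, v₀, v₁, …)`, which is
multiplication by `t`, `head` is `v₀`, and `unit` is the series `1`. -/
structure ShiftData (X : Type*) [NormedAddCommGroup X] [NormedSpace 𝕜 X] where
  left : X →L[𝕜] X
  right : X →L[𝕜] X
  head : X →L[𝕜] 𝕜
  unit : X
  norm_left_le : ‖left‖ ≤ 1
  left_right : ∀ v, left (right v) = v
  head_right : ∀ v, head (right v) = 0
  left_unit : left unit = 0
  head_unit : head unit = 1

variable (𝕜) in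
/-- The shifts of bounded sequences. -/
noncomputable def boundedShiftData : ShiftData 𝕜 (ℕ →ᵇ 𝕜) where
  left := LinearMap.mkContinuous
    { toFun := fun v => v.compContinuous ⟨Nat.succ, continuous_of_discreteTopology⟩
      map_add' := fun _ _ => rfl
      map_smul' := fun _ _ => rfl } 1 fun v => by
        rw [one_mul]
        exact (BoundedContinuousFunction.norm_le (norm_nonneg v)).2 fun _ => v.norm_coe_le_norm _
  right := LinearMap.mkContinuous
    { toFun := fun v => BoundedContinuousFunction.ofNormedAddCommGroupDiscrete
        (fun k => Nat.casesOn k 0 v) ‖v‖ (by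
          rintro (_ | k)
          · simp
          · exact v.norm_coe_le_norm k)
      map_add' := fun v w => by ext (_ | k) <;> simp
      map_smul' := fun c v => by ext (_ | k) <;> simp } 1 fun v => by
        rw [one_mul]
        refine (BoundedContinuousFunction.norm_le (norm_nonneg v)).2 ?_
        rintro (_ | k)
        · simp
        · exact v.norm_coe_le_norm k
  head := BoundedContinuousFunction.evalCLM 𝕜 0
  unit := BoundedContinuousFunction.ofNormedAddCommGroupDiscrete (Pi.single 0 1) 1 (by
    rintro (_ | k) <;> simp)
  norm_left_le := LinearMap.mkContinuous_norm_le _ zero_le_one _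
  left_right _ := rfl
  head_right _ := rfl
  left_unit := by
    ext k
    exact Pi.single_eq_of_ne (M := fun _ => 𝕜) k.succ_ne_zero 1
  head_unit := rfl

namespace ShiftData

variable {X : Type*} [NormedAddCommGroup X] [NormedSpace 𝕜 X] (σ : ShiftData 𝕜 X)

lemma left_pow_mul_right_pow (m : ℕ) : σ.left ^ m * σ.right ^ m = 1 := by
  induction m with
  | zero => simp
  | succ m ih =>
    have hone : σ.left * σ.right = 1 := ContinuousLinearMap.ext σ.left_right
    rw [pow_succ, pow_succ', mul_assoc, ← mul_assoc σ.left, hone, one_mul, ih]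

/-- The value at `s` of the power series `v`. It is defined through the inverse of `1 - s L`, where
`L` is the left shift, so that it is analytic in `s` as an operator; it is meaningful for
`‖s‖ < 1`. -/
noncomputable def eval (s : 𝕜) : X →L[𝕜] 𝕜 :=
  σ.head.comp (Ring.inverse (1 - s • σ.left))

variable [CompleteSpace X]

lemma analyticAt_eval : AnalyticAt 𝕜 σ.eval 0 := by
  have hinv : AnalyticAt 𝕜 (fun s : 𝕜 => Ring.inverse (1 - s • σ.left)) 0 :=
    analyticAt_ringInverse (analyticAt_const.sub (analyticAt_id.smul analyticAt_const)) (by simp)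
  exact ((ContinuousLinearMap.compL 𝕜 X X 𝕜 σ.head).analyticAt _).fun_comp hinv

variable {s : 𝕜} (hs : ‖s‖ < 1)
include hs

lemma eval_eq_head_add (v : X) : σ.eval s v = σ.head v + s * σ.eval s (σ.left v) := by
  have hnorm : ‖s • σ.left‖ < 1 := by
    rw [norm_smul]
    exact (mul_le_of_le_one_right (norm_nonneg s) σ.norm_left_le).trans_lt hs
  have hv : σ.eval s ((1 - s • σ.left) v) = σ.head v :=
    congrArg (fun A : X →L[𝕜] X => σ.head (A v))
      (Ring.inverse_mul_cancel _ (isUnit_one_sub_of_norm_lt_one hnorm))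
  rw [← hv]
  simp

lemma eval_unit : σ.eval s σ.unit = 1 := by
  simp [σ.eval_eq_head_add hs σ.unit, σ.left_unit, σ.head_unit]

lemma eval_right (v : X) : σ.eval s (σ.right v) = s * σ.eval s v := by
  rw [σ.eval_eq_head_add hs, σ.head_right, σ.left_right, zero_add]

lemma eval_right_pow (m : ℕ) (v : X) : σ.eval s ((σ.right ^ m) v) = s ^ m * σ.eval s v := by
  induction m with
  | zero => simp
  | succ m ih => rw [pow_succ', mul_apply_eq_comp, σ.eval_right hs, ih, pow_succ', mul_assoc]

lemma eval_eq_sum_add (m : ℕ) (v : X) :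
    σ.eval s v = ∑ i ∈ Finset.range m, σ.head ((σ.left ^ i) v) * s ^ i +
      s ^ m * σ.eval s ((σ.left ^ m) v) := by
  induction m with
  | zero => simp
  | succ m ih =>
    rw [ih, σ.eval_eq_head_add hs, Finset.sum_range_succ, pow_succ' σ.left, mul_apply_eq_comp]
    ring

end ShiftData

end Shift

section WeierstrassDivision

variable {𝕜 E X : Type*} [NontriviallyNormedField 𝕜] [NormedAddCommGroup E] [NormedSpace 𝕜 E]
  [NormedAddCommGroup X] [NormedSpace 𝕜 X]

lemma analyticAt_clm_apply {Y Z : Type*} [NormedAddCommGroup Y] [NormedSpace 𝕜 Y]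
    [NormedAddCommGroup Z] [NormedSpace 𝕜 Z] {A : E → Y →L[𝕜] Z} {v : E → Y} {a : E}
    (hA : AnalyticAt 𝕜 A a) (hv : AnalyticAt 𝕜 v a) : AnalyticAt 𝕜 (fun x => A x (v x)) a :=
  ((ContinuousLinearMap.id 𝕜 (Y →L[𝕜] Z)).analyticAt_bilinear (A a, v a)).comp₂ hA hv

namespace ShiftData

lemma nontrivial (σ : ShiftData 𝕜 X) : Nontrivial X :=
  ⟨σ.unit, 0, fun h => one_ne_zero (by rw [← σ.head_unit, h, map_zero])⟩

/-- The operators `T x` represent multiplication by `s ↦ f (s, x)` on power series in `s`. -/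
def IsMultiplier (σ : ShiftData 𝕜 X) (T : E → X →L[𝕜] X) (f : 𝕜 × E → 𝕜) : Prop :=
  ∀ᶠ x in 𝓝 0, ∀ s : 𝕜, ‖s‖ < 1 → ∀ v, σ.eval s (T x v) = f (s, x) * σ.eval s v

variable [CompleteSpace X] (σ : ShiftData 𝕜 X)

lemma eventually_exists_isMultiplier {f : 𝕜 × E → 𝕜} (hf : AnalyticAt 𝕜 f 0) :
    ∀ᶠ ρ in 𝓝 (0 : 𝕜), ∃ T : E → X →L[𝕜] X, AnalyticAt 𝕜 T 0 ∧
      σ.IsMultiplier T (fun z => f (ρ * z.1, z.2)) ∧ (f 0 ≠ 0 → IsUnit (T 0)) := by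
  have := σ.nontrivial
  obtain ⟨F, hF, hF0, hFmul⟩ := exists_analyticAt_subst hf σ.right
  have hunit : ∀ᶠ z in 𝓝 0, f 0 ≠ 0 → IsUnit (F z) := by
    by_cases h : f 0 = 0
    · exact .of_forall fun _ h' => absurd h h'
    · have hF0 : IsUnit (F 0) := hF0 ▸ (IsUnit.mk0 _ h).map (algebraMap 𝕜 (X →L[𝕜] X))
      exact (hF.continuousAt.eventually (Units.isOpen.mem_nhds hF0)).mono fun _ hz _ => hz
  filter_upwards [(hF.eventually_analyticAt.and (hunit.and hFmul)).curry_nhds] with ρ hρ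
  refine ⟨fun x => F (ρ, x), ?_, ?_, hρ.self_of_nhds.2.1⟩
  · exact AnalyticAt.fun_comp hρ.self_of_nhds.1 (analyticAt_const.prod analyticAt_id)
  · filter_upwards [hρ] with x hx s hs v
    simpa using hx.2.2 s hs.le ((σ.eval s).comp (.flip (.id 𝕜 (X →L[𝕜] X)) v))
      fun a => σ.eval_right hs (a v)

-- The part of `T` that depends only on the first variable is divisible by `t ^ m`, where `m` is
-- its order, so it may be replaced by `R ^ m` times an invertible operator.
lemma exists_isMultiplier_isUnit_left_pow {g : 𝕜 × E → 𝕜} (hg : AnalyticAt 𝕜 g 0)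
    (hreg : ¬ ∀ᶠ t in 𝓝 (0 : 𝕜), g (t, 0) = 0) :
    ∃ m : ℕ, ∀ᶠ ρ in 𝓝[≠] (0 : 𝕜), ∃ T : E → X →L[𝕜] X, AnalyticAt 𝕜 T 0 ∧
      σ.IsMultiplier T (fun z => g (ρ * z.1, z.2)) ∧ IsUnit (σ.left ^ m * T 0) := by
  have haxis : AnalyticAt 𝕜 (fun t : 𝕜 => g (t, 0)) 0 :=
    AnalyticAt.fun_comp hg (analyticAt_id.prod analyticAt_const)
  obtain ⟨m, w, hw, hw0, hgw⟩ := haxis.exists_eventuallyEq_pow_smul_nonzero_iff.2 hreg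
  obtain ⟨ε, hε, hgw⟩ := Metric.eventually_nhds_iff_ball.1 hgw
  have hwfst : AnalyticAt 𝕜 (fun z : 𝕜 × E => w z.1) 0 := AnalyticAt.fun_comp hw analyticAt_fst
  refine ⟨m, ?_⟩
  filter_upwards [nhdsWithin_le_nhds (σ.eventually_exists_isMultiplier hg),
    nhdsWithin_le_nhds (σ.eventually_exists_isMultiplier hwfst),
    nhdsWithin_le_nhds (Metric.ball_mem_nhds 0 hε), self_mem_nhdsWithin]
    with ρ ⟨T, hT, hTmul, _⟩ ⟨W, _, hWmul, hWunit⟩ hρε hρ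
  refine ⟨fun x => T x - T 0 + ρ ^ m • (σ.right ^ m * W 0),
    (hT.sub analyticAt_const).add analyticAt_const, ?_, ?_⟩
  · filter_upwards [hTmul] with x hx s hs v
    have hρs : ρ * s ∈ Metric.ball 0 ε := by
      rw [mem_ball_zero_iff, norm_mul] at *
      exact (mul_le_of_le_one_right (norm_nonneg ρ) hs.le).trans_lt hρε
    simp only [add_apply, sub_apply, smul_apply, mul_apply_eq_comp, map_add, map_sub, map_smul,
      hx s hs, hTmul.self_of_nhds s hs, σ.eval_right_pow hs, hWmul.self_of_nhds s hs, hgw _ hρs,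
      smul_eq_mul, sub_zero]
    ring
  · have hleft : σ.left ^ m * (T 0 - T 0 + ρ ^ m • (σ.right ^ m * W 0)) = ρ ^ m • W 0 := by
      rw [sub_self, zero_add, mul_smul_comm, ← mul_assoc, σ.left_pow_mul_right_pow, one_mul]
    rw [hleft]
    exact (hWunit hw0).smul (Units.mk0 (ρ ^ m) (pow_ne_zero m hρ))

-- Division by `t ^ m` with remainder is inverted through the operator `L ^ m T x`: the quotient
-- `v` solves `L ^ m (H x 1 - T x v) = 0`.
lemma exists_division {g h : 𝕜 × E → 𝕜} {T H : E → X →L[𝕜] X} {m : ℕ}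
    (hT : AnalyticAt 𝕜 T 0) (hTg : σ.IsMultiplier T g) (hunit : IsUnit (σ.left ^ m * T 0))
    (hH : AnalyticAt 𝕜 H 0) (hHh : σ.IsMultiplier H h) :
    ∃ (q : 𝕜 × E → 𝕜) (r : ℕ → E → 𝕜), AnalyticAt 𝕜 q 0 ∧ (∀ i, AnalyticAt 𝕜 (r i) 0) ∧
      ∀ᶠ z in 𝓝 0, h z = q z * g z + ∑ i ∈ Finset.range m, r i z.2 * z.1 ^ i := by
  have hLT : AnalyticAt 𝕜 (fun x => σ.left ^ m * T x) 0 := analyticAt_const.mul hT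
  have hH1 : AnalyticAt 𝕜 (fun x => H x σ.unit) 0 := analyticAt_clm_apply hH analyticAt_const
  let v (x : E) : X := Ring.inverse (σ.left ^ m * T x) ((σ.left ^ m) (H x σ.unit))
  have hv : AnalyticAt 𝕜 v 0 := analyticAt_clm_apply (analyticAt_ringInverse hLT hunit)
    (((σ.left ^ m).analyticAt _).fun_comp hH1)
  have hrem : AnalyticAt 𝕜 (fun x => H x σ.unit - T x (v x)) 0 :=
    hH1.sub (analyticAt_clm_apply hT hv)
  have hvanish : ∀ᶠ x in 𝓝 0, (σ.left ^ m) (H x σ.unit - T x (v x)) = 0 := by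
    filter_upwards [hLT.continuousAt.eventually (Units.isOpen.mem_nhds hunit)] with x hx
    rw [map_sub, sub_eq_zero]
    exact (congrArg (fun A : X →L[𝕜] X => A ((σ.left ^ m) (H x σ.unit)))
      (Ring.mul_inverse_cancel _ hx)).symm
  refine ⟨fun z => σ.eval z.1 (v z.2), fun i x => σ.head ((σ.left ^ i) (H x σ.unit - T x (v x))),
    ?_, fun i => ((σ.head ∘L σ.left ^ i).analyticAt _).fun_comp hrem, ?_⟩
  · exact analyticAt_clm_apply (AnalyticAt.fun_comp σ.analyticAt_eval analyticAt_fst)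
      (AnalyticAt.fun_comp hv analyticAt_snd)
  · have hball : ∀ᶠ s : 𝕜 in 𝓝 0, ‖s‖ < 1 := by
      filter_upwards [Metric.ball_mem_nhds (0 : 𝕜) one_pos] with s using mem_ball_zero_iff.1
    filter_upwards [hball.prod_nhds ((hTg.and hHh).and hvanish)] with z ⟨hs, ⟨hTx, hHx⟩, hx⟩
    have hsum := σ.eval_eq_sum_add hs m (H z.2 σ.unit - T z.2 (v z.2))
    rw [hx, map_zero, mul_zero, add_zero, map_sub, hTx _ hs, hHx _ hs, σ.eval_unit hs] at hsum
    rw [← hsum]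
    ring

end ShiftData

theorem exists_weierstrass_division [CompleteSpace 𝕜] {g : 𝕜 × E → 𝕜} (hg : AnalyticAt 𝕜 g 0)
    (hreg : ¬ ∀ᶠ t in 𝓝 (0 : 𝕜), g (t, 0) = 0) :
    ∃ m : ℕ, ∀ h : 𝕜 × E → 𝕜, AnalyticAt 𝕜 h 0 →
      ∃ (q : 𝕜 × E → 𝕜) (r : ℕ → E → 𝕜), AnalyticAt 𝕜 q 0 ∧ (∀ i, AnalyticAt 𝕜 (r i) 0) ∧
        ∀ᶠ z in 𝓝 0, h z = q z * g z + ∑ i ∈ Finset.range m, r i z.2 * z.1 ^ i := by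
  obtain ⟨m, hm⟩ := (boundedShiftData 𝕜).exists_isMultiplier_isUnit_left_pow hg hreg
  refine ⟨m, fun h hh => ?_⟩
  obtain ⟨ρ, ⟨⟨T, hT, hTg, hunit⟩, H, hH, hHh, _⟩, hρ : ρ ≠ 0⟩ :=
    ((hm.and (nhdsWithin_le_nhds
      ((boundedShiftData 𝕜).eventually_exists_isMultiplier hh))).and self_mem_nhdsWithin).exists
  obtain ⟨q, r, hq, hr, hdiv⟩ :=
    (boundedShiftData 𝕜).exists_division hT hTg hunit hH hHh
  let scale : 𝕜 × E →L[𝕜] 𝕜 × E := (ρ⁻¹ • ContinuousLinearMap.id 𝕜 𝕜).prodMap (.id 𝕜 E)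
  have hscale : Tendsto scale (𝓝 0) (𝓝 0) := scale.continuous.tendsto' _ _ (map_zero _)
  refine ⟨q ∘ scale, fun i x => r i x * ρ⁻¹ ^ i, ?_, fun i => (hr i).mul analyticAt_const, ?_⟩
  · exact AnalyticAt.comp (by simpa using hq) (scale.analyticAt 0)
  · filter_upwards [hscale.eventually hdiv] with z hz
    simpa [scale, mul_pow, mul_assoc, mul_inv_cancel_left₀ hρ] using hz

end WeierstrassDivision

section AnalyticGerms

/-- The algebra structure on germs whose scalar multiplication is the pointwise one. -/
noncomputable instance germAlgebra {α R A : Type*} {l : Filter α} [CommSemiring R] [Semiring A]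
    [Algebra R A] : Algebra R (Germ l A) :=
  Algebra.ofModule
    (fun c g h => Germ.inductionOn₂ g h fun g h => congrArg Germ.ofFun (smul_mul_assoc c g h))
    (fun c g h => Germ.inductionOn₂ g h fun g h => congrArg Germ.ofFun (mul_smul_comm c g h))

variable (𝕜 E F : Type*) [NontriviallyNormedField 𝕜] [NormedAddCommGroup E] [NormedSpace 𝕜 E]
  [NormedAddCommGroup F] [NormedSpace 𝕜 F]

/-- The algebra of germs at the origin of scalar analytic functions on `E`. -/
noncomputable def analyticGerms : Subalgebra 𝕜 (Germ (𝓝 (0 : E)) 𝕜) where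
  carrier := {g | ∃ f : E → 𝕜, AnalyticAt 𝕜 f 0 ∧ (f : Germ (𝓝 (0 : E)) 𝕜) = g}
  mul_mem' := by
    rintro _ _ ⟨f, hf, rfl⟩ ⟨g, hg, rfl⟩
    exact ⟨f * g, hf.mul hg, rfl⟩
  add_mem' := by
    rintro _ _ ⟨f, hf, rfl⟩ ⟨g, hg, rfl⟩
    exact ⟨f + g, hf.add hg, rfl⟩
  algebraMap_mem' c := ⟨fun _ => c • 1, analyticAt_const, rfl⟩

variable {𝕜 E F}

namespace analyticGerms

/-- The germ at the origin of a function that is analytic there. -/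
noncomputable def mk (f : E → 𝕜) (hf : AnalyticAt 𝕜 f 0) : analyticGerms 𝕜 E := ⟨f, f, hf, rfl⟩

lemma exists_mk_eq (g : analyticGerms 𝕜 E) : ∃ f hf, mk f hf = g := by
  obtain ⟨_, f, hf, rfl⟩ := g
  exact ⟨f, hf, rfl⟩

lemma mk_eq_mk {f g : E → 𝕜} {hf : AnalyticAt 𝕜 f 0} {hg : AnalyticAt 𝕜 g 0} :
    mk f hf = mk g hg ↔ f =ᶠ[𝓝 0] g :=
  Subtype.ext_iff.trans Germ.coe_eq

lemma mk_eq_zero {f : E → 𝕜} {hf : AnalyticAt 𝕜 f 0} : mk f hf = 0 ↔ ∀ᶠ x in 𝓝 0, f x = 0 :=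
  mk_eq_mk (hg := analyticAt_const)

/-- The value of a germ at the origin. -/
noncomputable def value : analyticGerms 𝕜 E →ₐ[𝕜] 𝕜 where
  __ := Germ.valueRingHom.comp (analyticGerms 𝕜 E).val.toRingHom
  commutes' c := mul_one c

lemma isUnit_of_value_ne_zero {g : analyticGerms 𝕜 E} (hg : value g ≠ 0) : IsUnit g := by
  obtain ⟨f, hf, rfl⟩ := exists_mk_eq g
  have hinv : mk f hf * mk (fun x => (f x)⁻¹) (hf.inv hg) = 1 :=
    (mk_eq_mk (hf := hf.mul (hf.inv hg)) (hg := analyticAt_const)).2 <|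
      (hf.continuousAt.eventually_ne hg).mono fun x hx => mul_inv_cancel₀ hx
  exact .of_mul_eq_one _ hinv

lemma value_eq_zero_of_map_eq_zero {K : Type*} [CommRing K] [Nontrivial K] [Algebra 𝕜 K]
    {ev : analyticGerms 𝕜 E →ₐ[𝕜] K} {g : analyticGerms 𝕜 E} (hg : ev g = 0) : value g = 0 := by
  by_contra h
  exact ((isUnit_of_value_ne_zero h).map ev).ne_zero hg

lemma algebraMap_value_eq_of_isAlgebraic {K : Type*} [Field K] [Algebra 𝕜 K]
    {ev : analyticGerms 𝕜 E →ₐ[𝕜] K} {g : analyticGerms 𝕜 E} (hg : IsAlgebraic 𝕜 (ev g)) :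
    algebraMap 𝕜 K (value g) = ev g := by
  refine minpoly.root hg.isIntegral ?_
  have hroot : ev (aeval g (minpoly 𝕜 (ev g))) = 0 := by
    rw [← aeval_algHom_apply, minpoly.aeval]
  rw [IsRoot.def, ← coe_aeval_eq_eval, aeval_algHom_apply]
  exact value_eq_zero_of_map_eq_zero hroot

/-- Precomposition of germs with a continuous linear map. -/
noncomputable def pullback (A : E →L[𝕜] F) : analyticGerms 𝕜 F →ₐ[𝕜] analyticGerms 𝕜 E where
  toFun g := ⟨g.1.compTendsto A (A.continuous.tendsto' 0 0 (map_zero A)), by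
    obtain ⟨_, f, hf, rfl⟩ := g
    exact ⟨f ∘ A, AnalyticAt.comp (by simpa using hf) (A.analyticAt 0), rfl⟩⟩
  map_one' := rfl
  map_zero' := rfl
  map_mul' := by
    rintro ⟨_, f, hf, rfl⟩ ⟨_, g, hg, rfl⟩
    rfl
  map_add' := by
    rintro ⟨_, f, hf, rfl⟩ ⟨_, g, hg, rfl⟩
    rfl
  commutes' _ := rfl

lemma pullback_mk (A : E →L[𝕜] F) {f : F → 𝕜} (hf : AnalyticAt 𝕜 f 0) :
    pullback A (mk f hf) =
      mk (f ∘ A) (AnalyticAt.comp (by simpa using hf) (A.analyticAt 0)) := rfl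

lemma pullback_pullback {G : Type*} [NormedAddCommGroup G] [NormedSpace 𝕜 G] (A : E →L[𝕜] F)
    (B : F →L[𝕜] G) (g : analyticGerms 𝕜 G) : pullback A (pullback B g) = pullback (B ∘L A) g := by
  obtain ⟨f, hf, rfl⟩ := exists_mk_eq g
  rfl

lemma pullback_zero (g : analyticGerms 𝕜 F) :
    pullback (0 : E →L[𝕜] F) g = algebraMap 𝕜 _ (value g) := by
  obtain ⟨f, hf, rfl⟩ := exists_mk_eq g
  exact Subtype.ext (Germ.coe_eq.2 (.of_forall fun _ => (mul_one (f 0)).symm))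

lemma pullback_id (g : analyticGerms 𝕜 E) : pullback (.id 𝕜 E) g = g := by
  obtain ⟨f, hf, rfl⟩ := exists_mk_eq g
  rfl

section Derivative

variable [CompleteSpace 𝕜]

/-- The derivative of germs in the direction `v`. -/
noncomputable def dirDeriv (v : E) : Derivation 𝕜 (analyticGerms 𝕜 E) (analyticGerms 𝕜 E) :=
  .mk'
    { toFun := fun g => ⟨g.1.liftOn
          (fun f => ((fun x => fderiv 𝕜 f x v : E → 𝕜) : Germ (𝓝 (0 : E)) 𝕜)) fun _ _ h =>
            Germ.coe_eq.2 (h.fderiv.mono fun _ hx => congrArg (fun A : E →L[𝕜] 𝕜 => A v) hx), by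
        obtain ⟨_, f, hf, rfl⟩ := g
        exact ⟨_, analyticAt_clm_apply hf.fderiv analyticAt_const, rfl⟩⟩
      map_add' := by
        rintro ⟨_, f, hf, rfl⟩ ⟨_, g, hg, rfl⟩
        refine Subtype.ext (Germ.coe_eq.2 ?_)
        filter_upwards [hf.eventually_analyticAt, hg.eventually_analyticAt] with x hfx hgx
        exact congrArg (fun A : E →L[𝕜] 𝕜 => A v)
          (fderiv_add hfx.differentiableAt hgx.differentiableAt)
      map_smul' := by
        rintro c ⟨_, f, hf, rfl⟩
        refine Subtype.ext (Germ.coe_eq.2 ?_)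
        filter_upwards [hf.eventually_analyticAt] with x hfx
        exact congrArg (fun A : E →L[𝕜] 𝕜 => A v)
          (fderiv_const_smul hfx.differentiableAt c) } <| by
    rintro ⟨_, f, hf, rfl⟩ ⟨_, g, hg, rfl⟩
    refine Subtype.ext (Germ.coe_eq.2 ?_)
    filter_upwards [hf.eventually_analyticAt, hg.eventually_analyticAt] with x hfx hgx
    exact congrArg (fun A : E →L[𝕜] 𝕜 => A v)
      (fderiv_mul hfx.differentiableAt hgx.differentiableAt)

lemma dirDeriv_mk (v : E) {f : E → 𝕜} (hf : AnalyticAt 𝕜 f 0) :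
    dirDeriv v (mk f hf) =
      mk (fun x => fderiv 𝕜 f x v) (analyticAt_clm_apply hf.fderiv analyticAt_const) := rfl

lemma dirDeriv_zero (g : analyticGerms 𝕜 E) : dirDeriv (0 : E) g = 0 := by
  obtain ⟨f, hf, rfl⟩ := exists_mk_eq g
  rw [dirDeriv_mk, mk_eq_zero]
  exact .of_forall fun x => map_zero (fderiv 𝕜 f x)

lemma dirDeriv_pullback (A : E →L[𝕜] F) (v : E) (g : analyticGerms 𝕜 F) :
    dirDeriv v (pullback A g) = pullback A (dirDeriv (A v) g) := by
  obtain ⟨f, hf, rfl⟩ := exists_mk_eq g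
  simp only [pullback_mk, dirDeriv_mk, mk_eq_mk]
  have hA : Tendsto A (𝓝 0) (𝓝 0) := A.continuous.tendsto' 0 0 (map_zero A)
  filter_upwards [hA.eventually hf.eventually_analyticAt] with x hx
  rw [fderiv_comp x hx.differentiableAt A.differentiableAt, A.fderiv]
  rfl

end Derivative

end analyticGerms

end AnalyticGerms

section RCLike

variable {𝕜 E : Type*} [RCLike 𝕜] [NormedAddCommGroup E] [NormedSpace 𝕜 E]

lemma eqOn_zero_ball_of_eventually_eq_zero {f : E → 𝕜} {x y : E} {r : ℝ}
    (hf : AnalyticOnNhd 𝕜 f (Metric.ball x r)) (hy : y ∈ Metric.ball x r)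
    (h : ∀ᶠ z in 𝓝 y, f z = 0) : Set.EqOn f 0 (Metric.ball x r) :=
  let := NormedSpace.restrictScalars ℝ 𝕜 E
  hf.eqOn_zero_of_preconnected_of_eventuallyEq_zero (convex_ball x r).isPreconnected hy h

lemma eventually_eq_mul_of_mul_fderiv_eq {f g : E → 𝕜} {y : E} (hgy : g y ≠ 0)
    (hf : ∀ᶠ z in 𝓝 y, DifferentiableAt 𝕜 f z) (hg : ∀ᶠ z in 𝓝 y, DifferentiableAt 𝕜 g z)
    (h : ∀ᶠ z in 𝓝 y, ∀ v, g z * fderiv 𝕜 f z v = f z * fderiv 𝕜 g z v) :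
    ∀ᶠ z in 𝓝 y, f z = f y / g y * g z := by
  have hg0 : ∀ᶠ z in 𝓝 y, g z ≠ 0 := hg.self_of_nhds.continuousAt.eventually_ne hgy
  have hderiv : ∀ᶠ z in 𝓝 y, HasFDerivAt (fun z => f z * (g z)⁻¹) (0 : E →L[𝕜] 𝕜) z := by
    filter_upwards [hf, hg, h, hg0] with z hfz hgz hz hz0
    refine (hfz.hasFDerivAt.mul ((hasDerivAt_inv hz0).comp_hasFDerivAt z
      hgz.hasFDerivAt)).congr_fderiv (ContinuousLinearMap.ext fun v => ?_)
    simp only [add_apply, smul_apply, smul_eq_mul, zero_apply, Function.comp_apply]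
    field_simp
    linear_combination hz v
  obtain ⟨s, hs, hball⟩ := Metric.eventually_nhds_iff_ball.1 (hderiv.and hg0)
  let := NormedSpace.restrictScalars ℝ 𝕜 E
  filter_upwards [Metric.ball_mem_nhds y hs] with z hz
  have hconst : f z * (g z)⁻¹ = f y * (g y)⁻¹ :=
    Metric.isOpen_ball.is_const_of_fderiv_eq_zero (convex_ball y s).isPreconnected
      (fun w hw => (hball w hw).1.differentiableAt.differentiableWithinAt)
      (fun w hw => (hball w hw).1.fderiv) hz (Metric.mem_ball_self hs)
  rw [div_eq_mul_inv, ← hconst, inv_mul_cancel_right₀ (hball z hz).2]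

namespace analyticGerms

lemma exists_pullback_toSpanSingleton_ne_zero {g : analyticGerms 𝕜 E} (hg : g ≠ 0) :
    ∃ v, pullback (ContinuousLinearMap.toSpanSingleton 𝕜 v) g ≠ 0 := by
  obtain ⟨f, hf, rfl⟩ := exists_mk_eq g
  obtain ⟨r, hr, han⟩ := Metric.eventually_nhds_iff_ball.1 hf.eventually_analyticAt
  by_contra! hline
  simp only [pullback_mk, mk_eq_zero, Function.comp_apply,
    ContinuousLinearMap.toSpanSingleton_apply] at hline
  refine hg (mk_eq_zero.2 ?_)
  filter_upwards [Metric.ball_mem_nhds 0 hr] with v hv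
  rcases eq_or_ne v 0 with rfl | hv0
  · simpa using (hline 0).self_of_nhds
  have hv0 : 0 < ‖v‖ := norm_pos_iff.2 hv0
  have hball (t : 𝕜) : t ∈ Metric.ball 0 (r / ‖v‖) ↔ t • v ∈ Metric.ball 0 r := by
    rw [mem_ball_zero_iff, mem_ball_zero_iff, norm_smul, lt_div_iff₀ hv0]
  have hzero : Set.EqOn (fun t : 𝕜 => f (t • v)) 0 (Metric.ball 0 (r / ‖v‖)) := by
    refine eqOn_zero_ball_of_eventually_eq_zero (fun t ht => ?_)
      (Metric.mem_ball_self (by positivity)) (hline v)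
    have hft := han _ ((hball t).1 ht)
    fun_prop
  simpa using hzero ((hball 1).2 (by simpa using hv))

lemma exists_eq_smul_of_mul_dirDeriv_eq {f g : analyticGerms 𝕜 E} (hg : g ≠ 0)
    (h : ∀ v, g * dirDeriv v f = f * dirDeriv v g) : ∃ c : 𝕜, f = c • g := by
  obtain ⟨f, hf, rfl⟩ := exists_mk_eq f
  obtain ⟨g, hg', rfl⟩ := exists_mk_eq g
  obtain ⟨r, hr, han⟩ := Metric.eventually_nhds_iff_ball.1
    (hf.eventually_analyticAt.and hg'.eventually_analyticAt)
  have hwronskian (v : E) : Set.EqOn (fun z => g z * fderiv 𝕜 f z v - f z * fderiv 𝕜 g z v) 0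
      (Metric.ball 0 r) := by
    refine eqOn_zero_ball_of_eventually_eq_zero (fun z hz => ?_) (Metric.mem_ball_self hr)
      ((Germ.coe_eq.1 (congrArg Subtype.val (h v))).mono fun z hz => sub_eq_zero.2 hz)
    obtain ⟨hfz, hgz⟩ := han z hz
    exact (hgz.mul (analyticAt_clm_apply hfz.fderiv analyticAt_const)).sub
      (hfz.mul (analyticAt_clm_apply hgz.fderiv analyticAt_const))
  obtain ⟨y, hy, hgy⟩ : ∃ y ∈ Metric.ball 0 r, g y ≠ 0 := by
    by_contra! hcon
    exact hg (mk_eq_zero.2 (Metric.eventually_nhds_iff_ball.2 ⟨r, hr, hcon⟩))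
  have hyr : ∀ᶠ z in 𝓝 y, z ∈ Metric.ball 0 r := Metric.isOpen_ball.mem_nhds hy
  have hlocal := eventually_eq_mul_of_mul_fderiv_eq hgy
    (hyr.mono fun z hz => (han z hz).1.differentiableAt)
    (hyr.mono fun z hz => (han z hz).2.differentiableAt)
    (hyr.mono fun z hz v => sub_eq_zero.1 (hwronskian v hz))
  have hglobal : Set.EqOn (fun z => f z - f y / g y * g z) 0 (Metric.ball 0 r) :=
    eqOn_zero_ball_of_eventually_eq_zero
      (fun z hz => (han z hz).1.sub (analyticAt_const.mul (han z hz).2)) hy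
      (hlocal.mono fun z hz => sub_eq_zero.2 hz)
  refine ⟨f y / g y, Subtype.ext (Germ.coe_eq.2 ?_)⟩
  filter_upwards [Metric.ball_mem_nhds 0 hr] with z hz
  exact sub_eq_zero.1 (hglobal hz)

end analyticGerms

end RCLike

namespace analyticGerms

section WeierstrassPolynomial

variable {𝕜 F : Type*} [NontriviallyNormedField 𝕜] [NormedAddCommGroup F] [NormedSpace 𝕜 F]

lemma mk_sum {ι : Type*} (s : Finset ι) {f : ι → F → 𝕜} (hf : ∀ i, AnalyticAt 𝕜 (f i) 0) :
    mk (fun x => ∑ i ∈ s, f i x) (s.analyticAt_fun_sum fun i _ => hf i) =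
      ∑ i ∈ s, mk (f i) (hf i) := by
  refine Subtype.ext (.trans ?_ (AddSubmonoidClass.coe_finsetSum _ s).symm)
  exact (congrArg Germ.ofFun (Finset.sum_fn s f).symm).trans
    (map_sum (Germ.coeRingHom (𝓝 (0 : F))) f s)

lemma aeval_mk_id (p : 𝕜[X]) :
    aeval (mk id analyticAt_id : analyticGerms 𝕜 𝕜) p =
      mk (fun t => aeval t p) (analyticAt_id.aeval_polynomial p) := by
  induction p using Polynomial.induction_on' with
  | add p q hp hq =>
    rw [map_add, hp, hq]
    exact (mk_eq_mk (hf := (analyticAt_id.aeval_polynomial p).add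
      (analyticAt_id.aeval_polynomial q))).2 (.of_forall fun t => (map_add (aeval t) p q).symm)
  | monomial n c =>
    rw [aeval_monomial]
    exact (mk_eq_mk (hf := analyticAt_const.mul (analyticAt_id.pow n))).2
      (.of_forall fun t => by simp [aeval_monomial])

variable (𝕜) in
lemma transcendental_mk_id : Transcendental 𝕜 (mk id analyticAt_id : analyticGerms 𝕜 𝕜) := by
  refine transcendental_iff.2 fun p hp => ?_
  rw [aeval_mk_id, mk_eq_zero] at hp
  exact p.eq_zero_of_infinite_isRoot (infinite_of_mem_nhds 0 hp)

variable (𝕜 F) in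
/-- The germ of the first coordinate on `𝕜 × F`. -/
noncomputable def fstGerm : analyticGerms 𝕜 (𝕜 × F) := mk Prod.fst analyticAt_fst

/-- The germ on `𝕜 × F` of a polynomial in the first coordinate whose coefficients are germs in
the second coordinate. -/
noncomputable def polynomialGerm : (analyticGerms 𝕜 F)[X] →+* analyticGerms 𝕜 (𝕜 × F) :=
  eval₂RingHom (pullback (.snd 𝕜 𝕜 F)).toRingHom (fstGerm 𝕜 F)

lemma polynomialGerm_C (c : analyticGerms 𝕜 F) :
    polynomialGerm (C c) = pullback (.snd 𝕜 𝕜 F) c := eval₂_C _ _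

lemma polynomialGerm_X : polynomialGerm X = fstGerm 𝕜 F := eval₂_X _ _

theorem exists_eq_mul_add_polynomialGerm [CompleteSpace 𝕜] {g : analyticGerms 𝕜 (𝕜 × F)}
    (hg : pullback (.inl 𝕜 𝕜 F) g ≠ 0) :
    ∃ m : ℕ, ∀ h, ∃ q p, degree p < m ∧ h = q * g + polynomialGerm p := by
  obtain ⟨g, hg', rfl⟩ := exists_mk_eq g
  simp only [pullback_mk, Ne, mk_eq_zero] at hg
  obtain ⟨m, hm⟩ := exists_weierstrass_division hg' hg
  refine ⟨m, fun h => ?_⟩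
  obtain ⟨h, hh, rfl⟩ := exists_mk_eq h
  obtain ⟨q, r, hq, hr, hdiv⟩ := hm h hh
  refine ⟨mk q hq, ∑ i : Fin m, C (mk (r i) (hr i)) * X ^ (i : ℕ), degree_sum_fin_lt _, ?_⟩
  simp only [map_sum, map_mul, map_pow, polynomialGerm_C, polynomialGerm_X]
  have hsnd (i : ℕ) : AnalyticAt 𝕜 (fun z : 𝕜 × F => r i z.2 * z.1 ^ i) 0 :=
    (AnalyticAt.comp (x := (0 : 𝕜 × F)) (hr i) analyticAt_snd).mul (analyticAt_fst.pow i)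
  have hsum : mk _ (Finset.analyticAt_fun_sum (Finset.range m) fun i _ => hsnd i) =
      ∑ i : Fin m, pullback (.snd 𝕜 𝕜 F) (mk (r i) (hr i)) * fstGerm 𝕜 F ^ (i : ℕ) := by
    rw [mk_sum _ hsnd, Finset.sum_range]
    rfl
  rw [← hsum]
  exact (mk_eq_mk (hg := (hq.mul hg').add
    (Finset.analyticAt_fun_sum (Finset.range m) fun i _ => hsnd i))).2 hdiv

theorem exists_monic_polynomialGerm_eq_mul [CompleteSpace 𝕜] {g : analyticGerms 𝕜 (𝕜 × F)}
    (hg : pullback (.inl 𝕜 𝕜 F) g ≠ 0) :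
    ∃ W : (analyticGerms 𝕜 F)[X], W.Monic ∧ ∃ q, polynomialGerm W = q * g := by
  obtain ⟨m, hm⟩ := exists_eq_mul_add_polynomialGerm hg
  obtain ⟨q, p, hp, hqp⟩ := hm (fstGerm 𝕜 F ^ m)
  refine ⟨X ^ m - p, monic_X_pow_sub hp, q, ?_⟩
  exact (map_sub (polynomialGerm (𝕜 := 𝕜) (F := F)) _ _).trans (sub_eq_of_eq_add (by
    rw [map_pow, polynomialGerm_X, hqp]))

lemma pullback_inl_polynomialGerm (p : (analyticGerms 𝕜 F)[X]) :
    pullback (.inl 𝕜 𝕜 F) (polynomialGerm p) =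
      aeval (mk id analyticAt_id) (p.map (value : analyticGerms 𝕜 F →ₐ[𝕜] 𝕜).toRingHom) := by
  induction p using Polynomial.induction_on' with
  | add p q hp hq => simp only [map_add, hp, hq, Polynomial.map_add]
  | monomial n c =>
    rw [← C_mul_X_pow_eq_monomial]
    simp only [map_mul, map_pow, polynomialGerm_C, polynomialGerm_X, pullback_pullback,
      Polynomial.map_mul, Polynomial.map_pow, map_C, map_X, aeval_C, aeval_X,
      ContinuousLinearMap.snd_comp_inl, pullback_zero]
    rfl

lemma pullback_inl_polynomialGerm_ne_zero {W : (analyticGerms 𝕜 F)[X]} (hW : W.Monic) :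
    pullback (.inl 𝕜 𝕜 F) (polynomialGerm W) ≠ 0 := by
  rw [pullback_inl_polynomialGerm]
  exact fun h => (hW.map _).ne_zero (transcendental_iff.1 (transcendental_mk_id 𝕜) _ h)

end WeierstrassPolynomial

section TangentSpace

variable {𝕜 E F K : Type*} [NontriviallyNormedField 𝕜] [CompleteSpace 𝕜]
  [NormedAddCommGroup E] [NormedSpace 𝕜 E] [NormedAddCommGroup F] [NormedSpace 𝕜 F]
  [CommRing K] [Algebra 𝕜 K]

/-- The tangent space at a `K`-valued point `ev` of the algebra of germs: the combinations of
directional derivatives with coefficients in `K`. -/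
noncomputable def tangentSpace (ev : analyticGerms 𝕜 E →ₐ[𝕜] K) :
    Submodule K (analyticGerms 𝕜 E →ₗ[𝕜] K) :=
  Submodule.span K (Set.range fun v => ev.toLinearMap ∘ₗ (dirDeriv v).toLinearMap)

lemma comp_dirDeriv_mem_tangentSpace (ev : analyticGerms 𝕜 E →ₐ[𝕜] K) (v : E) :
    ev.toLinearMap ∘ₗ (dirDeriv v).toLinearMap ∈ tangentSpace ev :=
  Submodule.subset_span ⟨v, rfl⟩

lemma tangentSpace_le_derivationsAlong (ev : analyticGerms 𝕜 E →ₐ[𝕜] K) :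
    tangentSpace ev ≤ derivationsAlong ev :=
  Submodule.span_le.2 <| Set.range_subset_iff.2 fun v =>
    comp_derivation_mem_derivationsAlong ev (dirDeriv v)

lemma apply_eq_zero_of_mem_tangentSpace {ev : analyticGerms 𝕜 E →ₐ[𝕜] K}
    {g : analyticGerms 𝕜 E} (hg : ∀ v, ev (dirDeriv v g) = 0)
    {ω : analyticGerms 𝕜 E →ₗ[𝕜] K} (hω : ω ∈ tangentSpace ev) : ω g = 0 := by
  induction hω using Submodule.span_induction with
  | mem ω hω =>
    obtain ⟨v, rfl⟩ := hω
    exact hg v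
  | zero => rfl
  | add ω ψ _ _ hω hψ => rw [LinearMap.add_apply, hω, hψ, add_zero]
  | smul c ω _ hω => rw [LinearMap.smul_apply, hω, smul_zero]

lemma toLinearMap_comp_dirDeriv_comp_pullback (ev : analyticGerms 𝕜 E →ₐ[𝕜] K) (A : E →L[𝕜] F)
    (v : E) :
    (ev.toLinearMap ∘ₗ (dirDeriv v).toLinearMap) ∘ₗ (pullback A).toLinearMap =
      (ev.comp (pullback A)).toLinearMap ∘ₗ (dirDeriv (A v)).toLinearMap :=
  LinearMap.ext fun g => congrArg ev (dirDeriv_pullback A v g)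

lemma comp_pullback_mem_tangentSpace {ev : analyticGerms 𝕜 E →ₐ[𝕜] K} (A : E →L[𝕜] F)
    {ω : analyticGerms 𝕜 E →ₗ[𝕜] K} (hω : ω ∈ tangentSpace ev) :
    ω ∘ₗ (pullback A).toLinearMap ∈ tangentSpace (ev.comp (pullback A)) := by
  refine (Submodule.span_le.2 ?_ : tangentSpace ev ≤
    (tangentSpace (ev.comp (pullback A))).comap (LinearMap.lcomp K K (pullback A).toLinearMap)) hω
  rintro _ ⟨v, rfl⟩
  rw [SetLike.mem_coe, Submodule.mem_comap, LinearMap.lcomp_apply',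
    toLinearMap_comp_dirDeriv_comp_pullback]
  exact comp_dirDeriv_mem_tangentSpace _ _

lemma exists_comp_pullback_eq_of_mem_tangentSpace {ev : analyticGerms 𝕜 E →ₐ[𝕜] K} {A : E →L[𝕜] F}
    (hA : Function.Surjective A) {ω : analyticGerms 𝕜 F →ₗ[𝕜] K}
    (hω : ω ∈ tangentSpace (ev.comp (pullback A))) :
    ∃ ψ ∈ tangentSpace ev, ψ ∘ₗ (pullback A).toLinearMap = ω := by
  refine (Submodule.span_le.2 ?_ : tangentSpace (ev.comp (pullback A)) ≤
    (tangentSpace ev).map (LinearMap.lcomp K K (pullback A).toLinearMap)) hω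
  rintro _ ⟨w, rfl⟩
  obtain ⟨v, rfl⟩ := hA w
  exact ⟨_, comp_dirDeriv_mem_tangentSpace ev v, toLinearMap_comp_dirDeriv_comp_pullback ev A v⟩

end TangentSpace

section LinearProjection

variable {𝕜 F K : Type*} [NontriviallyNormedField 𝕜]
  [NormedAddCommGroup F] [NormedSpace 𝕜 F] [CommRing K] [Algebra 𝕜 K]
  {ev : analyticGerms 𝕜 (𝕜 × F) →ₐ[𝕜] K}

lemma dirDeriv_fstGerm [CompleteSpace 𝕜] (w : 𝕜 × F) :
    dirDeriv w (fstGerm 𝕜 F) = algebraMap 𝕜 _ w.1 := by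
  rw [fstGerm, dirDeriv_mk]
  refine Subtype.ext (Germ.coe_eq.2 (.of_forall fun z => ?_))
  simp [fderiv_fst]

lemma apply_polynomialGerm_eq_zero {δ : analyticGerms 𝕜 (𝕜 × F) →ₗ[𝕜] K}
    (hδ : δ ∈ derivationsAlong ev) (hsnd : ∀ c, δ (pullback (.snd 𝕜 𝕜 F) c) = 0)
    (hfst : δ (fstGerm 𝕜 F) = 0) (p : (analyticGerms 𝕜 F)[X]) : δ (polynomialGerm p) = 0 := by
  induction p using Polynomial.induction_on' with
  | add p q hp hq => rw [map_add, map_add, hp, hq, add_zero]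
  | monomial n c =>
    rw [← C_mul_X_pow_eq_monomial, map_mul, map_pow, polynomialGerm_C, polynomialGerm_X, hδ,
      hsnd, map_pow_eq_zero_of_mem_derivationsAlong hδ hfst, mul_zero, mul_zero, add_zero]

variable [CompleteSpace 𝕜]

lemma eq_zero_of_mem_derivationsAlong {g : analyticGerms 𝕜 (𝕜 × F)}
    (hg : pullback (.inl 𝕜 𝕜 F) g ≠ 0) (hevg : ev g = 0) {δ : analyticGerms 𝕜 (𝕜 × F) →ₗ[𝕜] K}
    (hδ : δ ∈ derivationsAlong ev) (hsnd : ∀ c, δ (pullback (.snd 𝕜 𝕜 F) c) = 0)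
    (hfst : δ (fstGerm 𝕜 F) = 0) : δ = 0 := by
  obtain ⟨W, hW, q, hWq⟩ := exists_monic_polynomialGerm_eq_mul hg
  have hevW : ev (polynomialGerm W) = 0 := by rw [hWq, map_mul, hevg, mul_zero]
  obtain ⟨m, hm⟩ := exists_eq_mul_add_polynomialGerm (pullback_inl_polynomialGerm_ne_zero hW)
  refine LinearMap.ext fun h => ?_
  obtain ⟨q, p, -, rfl⟩ := hm h
  rw [map_add, hδ, hevW, apply_polynomialGerm_eq_zero hδ hsnd hfst,
    apply_polynomialGerm_eq_zero hδ hsnd hfst, LinearMap.zero_apply]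
  ring

theorem comp_mem_tangentSpace_of_comp_snd {g : analyticGerms 𝕜 (𝕜 × F)}
    (hg : pullback (.inl 𝕜 𝕜 F) g ≠ 0) (hevg : ev g = 0) (D : Derivation 𝕜 K K)
    (hD : D.toLinearMap ∘ₗ (ev.comp (pullback (.snd 𝕜 𝕜 F))).toLinearMap ∈
      tangentSpace (ev.comp (pullback (.snd 𝕜 𝕜 F)))) :
    D.toLinearMap ∘ₗ ev.toLinearMap ∈ tangentSpace ev := by
  obtain ⟨ψ, hψ, hψD⟩ := exists_comp_pullback_eq_of_mem_tangentSpace Prod.snd_surjective hD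
  let τ : analyticGerms 𝕜 (𝕜 × F) →ₗ[𝕜] K :=
    ev.toLinearMap ∘ₗ (dirDeriv ((1, 0) : 𝕜 × F)).toLinearMap
  let ω := ψ + (D (ev (fstGerm 𝕜 F)) - ψ (fstGerm 𝕜 F)) • τ
  have hω : ω ∈ tangentSpace ev :=
    add_mem hψ (Submodule.smul_mem _ _ (comp_dirDeriv_mem_tangentSpace ev _))
  suffices D.toLinearMap ∘ₗ ev.toLinearMap - ω = 0 by rwa [sub_eq_zero.1 this]
  refine eq_zero_of_mem_derivationsAlong hg hevg
    (sub_mem (derivation_comp_mem_derivationsAlong ev D) (tangentSpace_le_derivationsAlong ev hω))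
    (fun c => ?_) ?_
  · have hc : τ (pullback (.snd 𝕜 𝕜 F) c) = 0 := by
      simp [τ, dirDeriv_pullback, dirDeriv_zero]
    have hψc := LinearMap.congr_fun hψD c
    simp only [LinearMap.comp_apply, AlgHom.toLinearMap_apply, AlgHom.comp_apply] at hψc
    simp [ω, hc, hψc]
  · have h1 : τ (fstGerm 𝕜 F) = 1 := by
      simp [τ, dirDeriv_fstGerm]
    simp [ω, h1]

lemma isIntegralElem_comp_pullback_snd {g : analyticGerms 𝕜 (𝕜 × F)}
    (hg : pullback (.inl 𝕜 𝕜 F) g ≠ 0) (hevg : ev g = 0) (h : analyticGerms 𝕜 (𝕜 × F)) :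
    (ev.comp (pullback (.snd 𝕜 𝕜 F))).toRingHom.IsIntegralElem (ev h) := by
  let f := (ev.comp (pullback (.snd 𝕜 𝕜 F))).toRingHom
  have hf (p : (analyticGerms 𝕜 F)[X]) : ev (polynomialGerm p) = p.eval₂ f (ev (fstGerm 𝕜 F)) :=
    hom_eval₂ p _ ev.toRingHom _
  obtain ⟨W, hW, q, hWq⟩ := exists_monic_polynomialGerm_eq_mul hg
  have hevW : ev (polynomialGerm W) = 0 := by rw [hWq, map_mul, hevg, mul_zero]
  have hfst : f.IsIntegralElem (ev (fstGerm 𝕜 F)) := ⟨W, hW, (hf W).symm.trans hevW⟩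
  obtain ⟨m, hm⟩ := exists_eq_mul_add_polynomialGerm (pullback_inl_polynomialGerm_ne_zero hW)
  obtain ⟨q, p, -, rfl⟩ := hm h
  rw [map_add, map_mul, hevW, mul_zero, zero_add, hf]
  let _ := f.toAlgebra
  exact adjoin_le_integralClosure hfst (aeval_mem_adjoin_singleton _ _)

end LinearProjection

section Induction

variable {𝕜 E K : Type*} [RCLike 𝕜] [NormedAddCommGroup E] [NormedSpace 𝕜 E]
  [Field K] [Algebra 𝕜 K]

lemma isAlgebraic_of_injective {ev : analyticGerms 𝕜 E →ₐ[𝕜] K} (hev : Function.Injective ev)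
    {u : K} (hu : ev.toRingHom.IsIntegralElem u)
    (hDu : ∀ D : Derivation 𝕜 K K, D.toLinearMap ∘ₗ ev.toLinearMap ∈ tangentSpace ev → D u = 0) :
    IsAlgebraic 𝕜 u := by
  let _ := ev.toRingHom.toAlgebra
  have : IsScalarTower 𝕜 (analyticGerms 𝕜 E) K := .of_algebraMap_eq fun c => (ev.commutes c).symm
  have : FaithfulSMul (analyticGerms 𝕜 E) K := (faithfulSMul_iff_algebraMap_injective _ _).2 hev
  have : CharZero K := charZero_of_injective_algebraMap (algebraMap 𝕜 K).injective
  have hu : IsIntegral (analyticGerms 𝕜 E) u := hu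
  refine isAlgebraic_of_forall_derivation_eq_zero (R := analyticGerms 𝕜 E)
    (d := fun v : E => dirDeriv v) (fun a b ha hab => exists_eq_smul_of_mul_dirDeriv_eq ha hab)
    hu.isAlgebraic fun v D hD => hDu D ?_
  have hDv : D.toLinearMap ∘ₗ ev.toLinearMap = ev.toLinearMap ∘ₗ (dirDeriv v).toLinearMap :=
    LinearMap.ext hD
  exact hDv ▸ comp_dirDeriv_mem_tangentSpace ev v

lemma exists_continuousLinearEquiv_prod {g : analyticGerms 𝕜 E} (hg : g ≠ 0) (hg0 : value g = 0) :
    ∃ (F : Submodule 𝕜 E) (e : E ≃L[𝕜] 𝕜 × F),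
      pullback (.inl 𝕜 𝕜 F) (pullback (e.symm : 𝕜 × F →L[𝕜] E) g) ≠ 0 := by
  obtain ⟨v, hv⟩ := exists_pullback_toSpanSingleton_ne_zero hg
  have hv0 : v ≠ 0 := by
    rintro rfl
    rw [ContinuousLinearMap.toSpanSingleton_zero, pullback_zero, hg0, map_zero] at hv
    exact hv rfl
  obtain ⟨φ, hφ⟩ := SeparatingDual.exists_eq_one (R := 𝕜) hv0
  let e : E ≃L[𝕜] 𝕜 × φ.ker := .equivOfRightInverse φ (.toSpanSingleton 𝕜 v) fun t => by simp [hφ]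
  have he : (e.symm : 𝕜 × φ.ker →L[𝕜] E) ∘L .inl 𝕜 𝕜 φ.ker = .toSpanSingleton 𝕜 v := by
    ext
    simp [e]
  exact ⟨φ.ker, e, by rwa [pullback_pullback, he]⟩

variable [FiniteDimensional 𝕜 E]

theorem isAlgebraic_of_forall_derivation_mem_tangentSpace {ev : analyticGerms 𝕜 E →ₐ[𝕜] K}
    {u : K} (hu : ev.toRingHom.IsIntegralElem u)
    (hDu : ∀ D : Derivation 𝕜 K K, D.toLinearMap ∘ₗ ev.toLinearMap ∈ tangentSpace ev → D u = 0) :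
    IsAlgebraic 𝕜 u := by
  induction hn : Module.finrank 𝕜 E using Nat.strong_induction_on generalizing E with | h n ih
  by_cases hev : Function.Injective ev
  · exact isAlgebraic_of_injective hev hu hDu
  obtain ⟨g, hevg, hg⟩ : ∃ g, ev g = 0 ∧ g ≠ 0 := by
    simpa [injective_iff_map_eq_zero] using hev
  obtain ⟨F, e, heg⟩ := exists_continuousLinearEquiv_prod hg (value_eq_zero_of_map_eq_zero hevg)
  obtain ⟨ev, rfl⟩ : ∃ ev', ev = ev'.comp (pullback (e.symm : 𝕜 × F →L[𝕜] E)) :=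
    ⟨ev.comp (pullback (e : E →L[𝕜] 𝕜 × F)), AlgHom.ext fun h => by
      simp [pullback_pullback, pullback_id]⟩
  refine ih (Module.finrank 𝕜 F) ?_ (ev := ev.comp (pullback (.snd 𝕜 𝕜 F))) ?_ ?_ rfl
  · rw [← hn, e.toLinearEquiv.finrank_eq, Module.finrank_prod, Module.finrank_self]
    exact lt_one_add _
  · exact isIntegralElem_trans
      (fun h => isIntegralElem_comp_pullback_snd heg hevg
        (pullback (e.symm : 𝕜 × F →L[𝕜] E) h)) hu
  · intro D hD
    have hDev := comp_mem_tangentSpace_of_comp_snd heg hevg D hD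
    exact hDu D (comp_pullback_mem_tangentSpace (e.symm : 𝕜 × F →L[𝕜] E) hDev)

end Induction

section VanishingIdeal

variable {𝕜 E : Type*} [NontriviallyNormedField 𝕜] [NormedAddCommGroup E] [NormedSpace 𝕜 E]

variable (𝕜) in
/-- The ideal of germs that vanish on `Z` near the origin. -/
def vanishingIdeal (Z : Set E) : Ideal (analyticGerms 𝕜 E) where
  carrier := {g | ∃ f hf, mk f hf = g ∧ ∀ᶠ x in 𝓝[Z] 0, f x = 0}
  zero_mem' := ⟨0, analyticAt_const, rfl, .of_forall fun _ => rfl⟩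
  add_mem' := by
    rintro _ _ ⟨f, hf, rfl, hfZ⟩ ⟨g, hg, rfl, hgZ⟩
    exact ⟨f + g, hf.add hg, rfl, by filter_upwards [hfZ, hgZ] with x hfx hgx; simp [hfx, hgx]⟩
  smul_mem' := by
    rintro h _ ⟨f, hf, rfl, hfZ⟩
    obtain ⟨h, hh, rfl⟩ := exists_mk_eq h
    exact ⟨h * f, hh.mul hf, rfl, by filter_upwards [hfZ] with x hfx; simp [hfx]⟩

lemma mk_mem_vanishingIdeal {Z : Set E} {f : E → 𝕜} {hf : AnalyticAt 𝕜 f 0} :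
    mk f hf ∈ vanishingIdeal 𝕜 Z ↔ ∀ᶠ x in 𝓝[Z] 0, f x = 0 := by
  refine ⟨?_, fun h => ⟨f, hf, rfl, h⟩⟩
  rintro ⟨g, hg, hgf, hgZ⟩
  filter_upwards [hgZ, (mk_eq_mk.1 hgf).filter_mono nhdsWithin_le_nhds] with x hx hgfx
  rw [← hgfx, hx]

lemma isRadical_vanishingIdeal (Z : Set E) : (vanishingIdeal 𝕜 Z).IsRadical := by
  rintro g ⟨n, hg⟩
  obtain ⟨f, hf, rfl⟩ := exists_mk_eq g
  have hgn : ∀ᶠ x in 𝓝[Z] 0, f x ^ n = 0 := mk_mem_vanishingIdeal (hf := hf.pow n).1 hg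
  exact mk_mem_vanishingIdeal.2 (hgn.mono fun x => eq_zero_of_pow_eq_zero)

end VanishingIdeal

section Radical

variable {𝕜 E : Type*} [RCLike 𝕜] [NormedAddCommGroup E] [NormedSpace 𝕜 E]

theorem sub_algebraMap_value_mem_radical [FiniteDimensional 𝕜 E] (g : analyticGerms 𝕜 E) :
    g - algebraMap 𝕜 _ (value g) ∈
      (Ideal.span (Set.range fun v : E => dirDeriv v g)).radical := by
  rw [Ideal.radical_eq_sInf, Ideal.mem_sInf]
  rintro P ⟨hgP, hP⟩
  obtain ⟨K, _, _, ev, hev⟩ := exists_algHom_field_eq_zero_iff_mem (k := 𝕜) P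
  have hdir (v : E) : ev (dirDeriv v g) = 0 := (hev _).2 (hgP (Ideal.subset_span ⟨v, rfl⟩))
  have halg : IsAlgebraic 𝕜 (ev g) :=
    isAlgebraic_of_forall_derivation_mem_tangentSpace ev.toRingHom.isIntegralElem_map
      fun _ hD => apply_eq_zero_of_mem_tangentSpace hdir hD
  rw [← hev, map_sub, ev.commutes, algebraMap_value_eq_of_isAlgebraic halg, sub_self]

end Radical

end analyticGerms

open analyticGerms in
theorem singular_points_in_zero_level_general {𝕜 E : Type*} [RCLike 𝕜] [NormedAddCommGroup E]
    [NormedSpace 𝕜 E] [FiniteDimensional 𝕜 E] {f : E → 𝕜} {a : E} (hf : AnalyticAt 𝕜 f a) :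
    ∀ᶠ x in 𝓝 a, fderiv 𝕜 f x = 0 → f x = f a := by
  let g : E → 𝕜 := fun x => f (a + x)
  have hg : AnalyticAt 𝕜 g 0 := AnalyticAt.comp (by simpa using hf) (by fun_prop)
  let Z : Set E := {x | fderiv 𝕜 g x = 0}
  have hjac : Ideal.span (Set.range fun v => dirDeriv v (mk g hg)) ≤ vanishingIdeal 𝕜 Z := by
    refine Ideal.span_le.2 (Set.range_subset_iff.2 fun v => ?_)
    rw [dirDeriv_mk, SetLike.mem_coe, mk_mem_vanishingIdeal]
    filter_upwards [self_mem_nhdsWithin] with x (hx : fderiv 𝕜 g x = 0)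
    rw [hx, zero_apply]
  have hmem := (isRadical_vanishingIdeal Z).radical_le_iff.2 hjac
    (sub_algebraMap_value_mem_radical (mk g hg))
  have hvanish : ∀ᶠ x in 𝓝[Z] 0, g x - g 0 * 1 = 0 :=
    mk_mem_vanishingIdeal (hf := hg.sub analyticAt_const).1 hmem
  rw [← map_add_left_nhds_zero, eventually_map]
  filter_upwards [eventually_nhdsWithin_iff.1 hvanish] with x hx hfx
  simpa [g, sub_eq_zero] using hx ((fderiv_comp_add_left a).trans hfx)

/-- Singular points of a real analytic germ with singular origin lie in the
zero level, as germs at the origin. -/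
theorem singular_points_in_zero_level (n : ℕ) (f : (Fin n → ℝ) → ℝ)
    (hf : ∀ᶠ x in nhds (0 : Fin n → ℝ), AnalyticAt ℝ f x)
    (hf0 : f 0 = 0)
    (hsing : fderiv ℝ f 0 = 0) :
    ∃ U ∈ nhds (0 : Fin n → ℝ), ∀ x ∈ U, fderiv ℝ f x = 0 → f x = 0 :=
  ⟨_, singular_points_in_zero_level_general hf.self_of_nhds, fun _ hx h => (hx h).trans hf0⟩
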